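/- Let α > 0, d ≥ 1, ℓ = ⌊α⌋⁻, and let A = {w_1, …, w_n} ⊂ ℝ^d be any finite set of distinct points such that the Matérn kernel matrix K_{A,A} is invertible. Define the conditional kernel K̃(x₁, x₂) = K(x₁, x₂) − K_{x₁,A} K_{A,A}⁻¹ K_{A,x₂} on ℝ^d × ℝ^d. Then K̃ is 2ℓ-times continuously differentiable on ℝ^{2d}, and there is a constant C > 0 depending only on α and d (in particular, independent of A and of n) such that for every multi-index k with |k| ≤ ℓ and all x₁, x₂, x ∈ ℝ^d: |K̃^{(k,k)}(x₁, x₂)| ≤ C and 0 ≤ K̃^{(k,k)}(x, x) ≤ K^{(k,k)}(x, x). -/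

import Mathlib

open Matrix MeasureTheory

noncomputable section

/-- The Matérn function with regularity `α` on ℝ^d (Fourier normalization):
`K_α(x) = ∫ cos⟨x,ξ⟩ (1+‖ξ‖₂²)^{-(α+d/2)} dξ`. -/
def matern (α : ℝ) (d : ℕ) (x : Fin d → ℝ) : ℝ :=
  ∫ ξ : Fin d → ℝ, Real.cos (∑ j, x j * ξ j) * (1 + ∑ j, ξ j ^ 2) ^ (-(α + (d : ℝ) / 2))

/-- `⌊α⌋⁻`, the largest integer strictly smaller than `α` (for `α > 0`). -/
def lbelow (α : ℝ) : ℕ := Nat.ceil α - 1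

/-- `α` is a (nonnegative) integer. -/
def IsNatVal (α : ℝ) : Prop := ∃ n : ℕ, α = n

/-- The Euclidean norm `‖x‖₂` on ℝ^d. -/
def nrm {d : ℕ} (x : Fin d → ℝ) : ℝ := Real.sqrt (∑ j, x j ^ 2)

/-- Partial derivative in the `j`-th coordinate. -/
def pder (d : ℕ) (j : Fin d) (f : (Fin d → ℝ) → ℝ) : (Fin d → ℝ) → ℝ :=
  fun x => fderiv ℝ f x (Pi.single j 1)

/-- The iterated partial derivative `∂^k` associated with a multi-index `k ∈ ℕ^d`. -/
def mder (d : ℕ) (k : Fin d → ℕ) (f : (Fin d → ℝ) → ℝ) : (Fin d → ℝ) → ℝ :=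
  (List.finRange d).foldr (fun j g => (pder d j)^[k j] g) f

/-- Mixed derivative `F^{(k₁,k₂)}(x₁,x₂) = ∂^{k₁}_{x₁} ∂^{k₂}_{x₂} F(x₁,x₂)`. -/
def mder2 (d : ℕ) (k₁ k₂ : Fin d → ℕ) (F : (Fin d → ℝ) → (Fin d → ℝ) → ℝ)
    (x₁ x₂ : Fin d → ℝ) : ℝ :=
  mder d k₁ (fun y => mder d k₂ (F y) x₂) x₁

/-- The Matérn kernel matrix `K_{A,A} = (K(w_i, w_j))_{i,j}`. -/
def maternMat (α : ℝ) (d : ℕ) {n : ℕ} (w : Fin n → Fin d → ℝ) :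
    Matrix (Fin n) (Fin n) ℝ :=
  Matrix.of fun i j => matern α d (w i - w j)

/-- The Matérn kernel column vector `K_{A,x} = (K(w_i, x))_i`. -/
def maternVec (α : ℝ) (d : ℕ) {n : ℕ} (w : Fin n → Fin d → ℝ) (x : Fin d → ℝ) :
    Fin n → ℝ :=
  fun i => matern α d (w i - x)

/-- The conditional kernel `K̃(x₁,x₂) = K(x₁,x₂) − K_{x₁,A} K_{A,A}⁻¹ K_{A,x₂}`. -/
def condK (α : ℝ) (d : ℕ) {n : ℕ} (w : Fin n → Fin d → ℝ) (x₁ x₂ : Fin d → ℝ) : ℝ :=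
  matern α d (x₁ - x₂) -
    maternVec α d w x₁ ⬝ᵥ ((maternMat α d w)⁻¹ *ᵥ maternVec α d w x₂)

open Complex in
/-- The character `ξ ↦ exp(i⟨x, ξ⟩)`. -/
def planeWave {d : ℕ} (x ξ : Fin d → ℝ) : ℂ := exp (((∑ j, x j * ξ j : ℝ) : ℂ) * I)

/-- The real part of the Fourier integral `∫ exp(i⟨x, ξ⟩) H(ξ) dξ`. -/
def reFourier {d : ℕ} (H : (Fin d → ℝ) → ℂ) (x : Fin d → ℝ) : ℝ :=
  (∫ ξ, planeWave x ξ * H ξ).re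

/-- `H` has integrable moments up to order `N`. -/
def HasMoments {d : ℕ} (N : ℕ) (H : (Fin d → ℝ) → ℂ) : Prop :=
  Integrable fun ξ => ((1 + ‖ξ‖ : ℝ) : ℂ) ^ N * H ξ

/-- The spectral density of the Matérn kernel. -/
def maternDensity (α : ℝ) (d : ℕ) (ξ : Fin d → ℝ) : ℝ :=
  (1 + ∑ j, ξ j ^ 2) ^ (-(α + (d : ℝ) / 2))

/-- The Fourier multiplier `(iξ)^k` of `∂^k`. -/
def mderSymbol {d : ℕ} (k : Fin d → ℕ) (ξ : Fin d → ℝ) : ℂ :=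
  ((List.finRange d).map fun j => (Complex.I * (ξ j : ℂ)) ^ k j).prod

section PlaneWave

variable {d : ℕ}

@[fun_prop]
lemma continuous_planeWave (x : Fin d → ℝ) : Continuous (planeWave x) := by
  unfold planeWave; fun_prop

@[simp]
lemma norm_planeWave (x ξ : Fin d → ℝ) : ‖planeWave x ξ‖ = 1 :=
  Complex.norm_exp_ofReal_mul_I _

lemma planeWave_re (x ξ : Fin d → ℝ) : (planeWave x ξ).re = Real.cos (∑ j, x j * ξ j) :=
  Complex.exp_ofReal_mul_I_re _

lemma planeWave_sub (x y ξ : Fin d → ℝ) :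
    planeWave (x - y) ξ = planeWave x ξ * planeWave (-y) ξ := by
  simp only [planeWave, ← Complex.exp_add, ← add_mul, ← Complex.ofReal_add,
    ← Finset.sum_add_distrib, sub_eq_add_neg, Pi.add_apply]

lemma conj_planeWave (x ξ : Fin d → ℝ) :
    (starRingEnd ℂ) (planeWave x ξ) = planeWave (-x) ξ := by
  simp [planeWave, ← Complex.exp_conj]

end PlaneWave

namespace HasMoments

variable {d N : ℕ} {H : (Fin d → ℝ) → ℂ}

lemma one_add_norm_ne_zero (ξ : Fin d → ℝ) : ((1 + ‖ξ‖ : ℝ) : ℂ) ≠ 0 := by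
  exact_mod_cast (by positivity : (0 : ℝ) < 1 + ‖ξ‖).ne'

/-- Multiplying by a function of growth order `p` costs `p` moments. -/
lemma mul (hH : HasMoments N H) {m : (Fin d → ℝ) → ℂ} (hm : Continuous m) {p M : ℕ}
    (hbound : ∀ ξ, ‖m ξ‖ ≤ (1 + ‖ξ‖) ^ p) (hp : p + M ≤ N) :
    HasMoments M fun ξ => m ξ * H ξ := by
  have hb := Integrable.bdd_mul (c := 1) hH
    (f := fun ξ => ((1 + ‖ξ‖ : ℝ) : ℂ) ^ M * m ξ / ((1 + ‖ξ‖ : ℝ) : ℂ) ^ N)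
    (Continuous.aestronglyMeasurable (by
      refine Continuous.div (by fun_prop) (by fun_prop) fun ξ => ?_
      exact pow_ne_zero _ (one_add_norm_ne_zero ξ)))
    (Filter.Eventually.of_forall fun ξ => by
      have h1 : (1 : ℝ) ≤ 1 + ‖ξ‖ := by linarith [norm_nonneg ξ]
      have h0 : (0 : ℝ) < 1 + ‖ξ‖ := by linarith
      rw [norm_div, norm_mul, norm_pow, norm_pow, Complex.norm_real, Real.norm_of_nonneg h0.le,
        div_le_one (by positivity)]
      calc (1 + ‖ξ‖) ^ M * ‖m ξ‖ ≤ (1 + ‖ξ‖) ^ M * (1 + ‖ξ‖) ^ p := by gcongr; exact hbound ξ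
        _ = (1 + ‖ξ‖) ^ (p + M) := by rw [← pow_add, add_comm p]
        _ ≤ (1 + ‖ξ‖) ^ N := pow_le_pow_right₀ h1 hp)
  refine hb.congr (Filter.Eventually.of_forall fun ξ => ?_)
  have := pow_ne_zero N (one_add_norm_ne_zero ξ)
  simp only
  field_simp

lemma mono (hH : HasMoments N H) {M : ℕ} (h : M ≤ N) : HasMoments M H := by
  simpa using hH.mul (m := fun _ => 1) continuous_const (p := 0) (by simp) (by simpa using h)

lemma planeWave_mul (hH : HasMoments N H) (a : Fin d → ℝ) :
    HasMoments N fun ξ => planeWave a ξ * H ξ :=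
  hH.mul (continuous_planeWave a) (p := 0) (by simp) (by simp)

lemma integrable (hH : HasMoments N H) : Integrable H := by
  simpa [HasMoments] using hH.mono (Nat.zero_le N)

lemma integrable_norm_pow_mul (hH : HasMoments N H) {n : ℕ} (hn : n ≤ N) :
    Integrable fun ξ => ‖ξ‖ ^ n * ‖H ξ‖ := by
  have := (hH.mul (m := fun ξ => (‖ξ‖ : ℂ) ^ n) (by fun_prop) (p := n) (M := 0)
    (fun ξ => by
      simp only [norm_pow, Complex.norm_real, norm_norm]
      gcongr; linarith) (by simpa using hn)).integrable.norm
  simpa using this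

lemma coord_pow_mul {k : ℕ} (hH : HasMoments (N + k) H) (j : Fin d) :
    HasMoments N fun ξ => (Complex.I * (ξ j : ℂ)) ^ k * H ξ :=
  hH.mul (by fun_prop) (p := k) (fun ξ => by
    have := norm_le_pi_norm ξ j
    rw [Real.norm_eq_abs] at this
    simp only [norm_pow, norm_mul, Complex.norm_I, one_mul, Complex.norm_real, Real.norm_eq_abs]
    gcongr; linarith) (by omega)

lemma const_mul (hH : HasMoments N H) (c : ℂ) : HasMoments N fun ξ => c * H ξ := by
  refine (Integrable.const_mul hH c).congr (Filter.Eventually.of_forall fun ξ => ?_)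
  simp only; ring

lemma sub {G : (Fin d → ℝ) → ℂ} (hH : HasMoments N H) (hG : HasMoments N G) :
    HasMoments N fun ξ => H ξ - G ξ := by
  refine (Integrable.sub hH hG).congr (Filter.Eventually.of_forall fun ξ => ?_)
  simp only [Pi.sub_apply]; ring

lemma sum {ι : Type*} [Fintype ι] {G : ι → (Fin d → ℝ) → ℂ} (hG : ∀ i, HasMoments N (G i)) :
    HasMoments N fun ξ => ∑ i, G i ξ := by
  refine (integrable_finsetSum Finset.univ fun i _ => hG i).congr
    (Filter.Eventually.of_forall fun ξ => ?_)
  simp only [Finset.mul_sum]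

end HasMoments

section ReFourier

variable {d : ℕ}

/-- The pairing turning `VectorFourier.fourierIntegral` into `∫ exp(i⟨x, ξ⟩) H(ξ) dξ`. -/
def fourierPairing (d : ℕ) : (Fin d → ℝ) →L[ℝ] (Fin d → ℝ) →L[ℝ] ℝ :=
  (-(2 * Real.pi)⁻¹) • ∑ j, (ContinuousLinearMap.proj j : (Fin d → ℝ) →L[ℝ] ℝ).smulRight
    (ContinuousLinearMap.proj j : (Fin d → ℝ) →L[ℝ] ℝ)

lemma fourierPairing_apply (ξ x : Fin d → ℝ) :
    fourierPairing d ξ x = -(2 * Real.pi)⁻¹ * ∑ j, x j * ξ j := by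
  simp [fourierPairing, mul_comm]

lemma fourierChar_smul_eq {E : Type*} [NormedAddCommGroup E] [NormedSpace ℂ E]
    (ξ x : Fin d → ℝ) (v : E) :
    Real.fourierChar (-(fourierPairing d).toLinearMap₁₂ ξ x) • v = planeWave x ξ • v := by
  rw [Circle.smul_def, Real.fourierChar_apply]
  congr 1
  change Complex.exp (((2 * Real.pi * -(fourierPairing d ξ x) : ℝ) : ℂ) * Complex.I) = _
  rw [planeWave, fourierPairing_apply]
  congr 2
  have := Real.pi_ne_zero
  norm_cast
  field_simp

lemma reFourier_eq (H : (Fin d → ℝ) → ℂ) :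
    reFourier H = fun x => Complex.reCLM
      (VectorFourier.fourierIntegral Real.fourierChar volume
        (fourierPairing d).toLinearMap₁₂ H x) := by
  funext x
  simp only [reFourier, VectorFourier.fourierIntegral, fourierChar_smul_eq, smul_eq_mul,
    Complex.reCLM_apply]

lemma contDiff_reFourier {N : ℕ} {H : (Fin d → ℝ) → ℂ} (hH : HasMoments N H) :
    ContDiff ℝ N (reFourier H) := by
  rw [reFourier_eq]
  exact Complex.reCLM.contDiff.comp (VectorFourier.contDiff_fourierIntegral (N := (N : ℕ∞)) _
    fun n hn => hH.integrable_norm_pow_mul (by exact_mod_cast hn))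

lemma pder_reFourier {H : (Fin d → ℝ) → ℂ} (hH : HasMoments 1 H) (j : Fin d) :
    pder d j (reFourier H) = reFourier fun ξ => Complex.I * (ξ j : ℂ) * H ξ := by
  funext x
  have hmom : Integrable fun ξ => ‖ξ‖ * ‖H ξ‖ := by
    simpa using hH.integrable_norm_pow_mul le_rfl
  have h := VectorFourier.hasFDerivAt_fourierIntegral (fourierPairing d) hH.integrable hmom x
  have h' := Complex.reCLM.hasFDerivAt.comp x h
  have heq : reFourier H = Complex.reCLM ∘ VectorFourier.fourierIntegral Real.fourierChar volume
    (fourierPairing d).toLinearMap₁₂ H := reFourier_eq H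
  rw [pder, heq, h'.fderiv, ContinuousLinearMap.comp_apply, reFourier, Complex.reCLM_apply]
  congr 1
  have hint : Integrable (VectorFourier.fourierSMulRight (fourierPairing d) H) := by
    refine Integrable.mono' (hmom.const_mul (2 * Real.pi * ‖fourierPairing d‖))
      hH.integrable.1.fourierSMulRight (Filter.Eventually.of_forall fun ξ => ?_)
    refine (VectorFourier.norm_fourierSMulRight_le _ _ _).trans (le_of_eq (by ring))
  rw [VectorFourier.fourierIntegral, ContinuousLinearMap.integral_apply]
  · refine integral_congr_ae (Filter.Eventually.of_forall fun ξ => ?_)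
    simp only
    rw [fourierChar_smul_eq, _root_.smul_apply, VectorFourier.fourierSMulRight_apply,
      fourierPairing_apply]
    have : (∑ i, (Pi.single j 1 : Fin d → ℝ) i * ξ i) = ξ j := by
      simp [Pi.single_apply]
    rw [this]
    have := Real.pi_ne_zero
    simp only [smul_eq_mul, Complex.real_smul]
    push_cast
    field_simp
  · exact (VectorFourier.fourierIntegral_convergent_iff Real.continuous_fourierChar
      (by simpa using! (fourierPairing d).continuous₂) x).2 hint

lemma iterate_pder_reFourier (j : Fin d) (n : ℕ) {H : (Fin d → ℝ) → ℂ} (hH : HasMoments n H) :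
    (pder d j)^[n] (reFourier H) = reFourier fun ξ => (Complex.I * (ξ j : ℂ)) ^ n * H ξ := by
  induction n with
  | zero => simp
  | succ n ih =>
    rw [Function.iterate_succ_apply', ih (hH.mono n.le_succ),
      pder_reFourier (HasMoments.coord_pow_mul (N := 1) (by rwa [add_comm]) j)]
    congr 1
    funext ξ
    ring

lemma foldr_iterate_pder_reFourier (k : Fin d → ℕ) (l : List (Fin d)) (N : ℕ)
    {H : (Fin d → ℝ) → ℂ} (hH : HasMoments (N + (l.map k).sum) H) :
    l.foldr (fun j g => (pder d j)^[k j] g) (reFourier H) =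
      reFourier (fun ξ => (l.map fun j => (Complex.I * (ξ j : ℂ)) ^ k j).prod * H ξ) ∧
    HasMoments N fun ξ => (l.map fun j => (Complex.I * (ξ j : ℂ)) ^ k j).prod * H ξ := by
  induction l generalizing N with
  | nil => simpa using hH
  | cons j l ih =>
    simp only [List.map_cons, List.sum_cons, List.prod_cons, List.foldr_cons] at hH ⊢
    obtain ⟨h1, h2⟩ := ih (N + k j) (by rwa [add_assoc])
    simp only [mul_assoc]
    exact ⟨by rw [h1, iterate_pder_reFourier _ _ (h2.mono (by omega))], h2.coord_pow_mul j⟩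

lemma mder_reFourier (k : Fin d → ℕ) {H : (Fin d → ℝ) → ℂ} (hH : HasMoments (∑ j, k j) H) :
    mder d k (reFourier H) = reFourier fun ξ => mderSymbol k ξ * H ξ :=
  (foldr_iterate_pder_reFourier k (List.finRange d) 0
    (by rwa [zero_add, ← List.ofFn_eq_map, List.sum_ofFn])).1

lemma continuous_mderSymbol (k : Fin d → ℕ) : Continuous (mderSymbol k) := by
  unfold mderSymbol; exact continuous_list_prod _ fun j _ => by fun_prop

lemma norm_mderSymbol_le (k : Fin d → ℕ) (ξ : Fin d → ℝ) :
    ‖mderSymbol k ξ‖ ≤ (1 + ‖ξ‖) ^ ∑ j, k j := by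
  rw [mderSymbol, ← List.ofFn_eq_map, List.prod_ofFn, norm_prod, ← Finset.prod_pow_eq_pow_sum]
  refine Finset.prod_le_prod (fun _ _ => norm_nonneg _) fun j _ => ?_
  have := norm_le_pi_norm ξ j
  simp only [norm_pow, norm_mul, Complex.norm_I, one_mul, Complex.norm_real]
  gcongr; linarith

lemma HasMoments.mderSymbol_mul {N : ℕ} {H : (Fin d → ℝ) → ℂ} (k : Fin d → ℕ)
    (hH : HasMoments (N + ∑ j, k j) H) : HasMoments N fun ξ => mderSymbol k ξ * H ξ :=
  hH.mul (continuous_mderSymbol k) (norm_mderSymbol_le k) (by omega)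

lemma reFourier_sub_sum {ι : Type*} [Fintype ι] {H : (Fin d → ℝ) → ℂ}
    {G : ι → (Fin d → ℝ) → ℂ} (hH : HasMoments 0 H) (hG : ∀ i, HasMoments 0 (G i)) (c : ι → ℝ)
    (x : Fin d → ℝ) :
    reFourier (fun ξ => H ξ - ∑ i, (c i : ℂ) * G i ξ) x =
      reFourier H x - ∑ i, c i * reFourier (G i) x := by
  have hGi : ∀ i, Integrable fun ξ => (c i : ℂ) * (planeWave x ξ * G i ξ) := fun i =>
    ((hG i).planeWave_mul x).integrable.const_mul _
  simp only [reFourier, mul_sub, Finset.mul_sum, mul_left_comm (planeWave _ _)]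
  rw [integral_sub (hH.planeWave_mul x).integrable (integrable_finsetSum _ fun i _ => hGi i),
    integral_finsetSum _ fun i _ => hGi i]
  simp [integral_const_mul]

lemma mder_reFourier_sub_sum (k : Fin d → ℕ) {ι : Type*} [Fintype ι] {H : (Fin d → ℝ) → ℂ}
    {G : ι → (Fin d → ℝ) → ℂ} (hH : HasMoments (∑ j, k j) H)
    (hG : ∀ i, HasMoments (∑ j, k j) (G i)) (c : ι → ℝ) (x : Fin d → ℝ) :
    mder d k (fun x => reFourier H x - ∑ i, c i * reFourier (G i) x) x =
      reFourier (fun ξ => mderSymbol k ξ * H ξ) x -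
        ∑ i, c i * reFourier (fun ξ => mderSymbol k ξ * G i ξ) x := by
  have h1 : (fun x => reFourier H x - ∑ i, c i * reFourier (G i) x) =
      reFourier fun ξ => H ξ - ∑ i, (c i : ℂ) * G i ξ := by
    funext y
    exact (reFourier_sub_sum (hH.mono (Nat.zero_le _))
      (fun i => (hG i).mono (Nat.zero_le _)) c y).symm
  rw [h1, mder_reFourier k (hH.sub (HasMoments.sum fun i => (hG i).const_mul _)),
    ← reFourier_sub_sum (HasMoments.mderSymbol_mul k (by simpa using hH))
      (fun i => HasMoments.mderSymbol_mul k (by simpa using hG i))]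
  congr 1
  funext ξ
  simp only [mul_sub, Finset.mul_sum, mul_left_comm (mderSymbol _ _)]

lemma reFourier_planeWave_neg_mul (H : (Fin d → ℝ) → ℂ) (a x : Fin d → ℝ) :
    reFourier (fun ξ => planeWave (-a) ξ * H ξ) x = reFourier H (x - a) := by
  simp only [reFourier, planeWave_sub, mul_assoc]

end ReFourier

section Residual

variable {E : Type*} [NormedAddCommGroup E] [InnerProductSpace ℝ E] {n : ℕ}

/-- The residual of the orthogonal projection computed by an invertible Gram matrix is orthogonal
to the projection. -/
lemma inner_residual_eq_zero {φ : Fin n → E} {M : Matrix (Fin n) (Fin n) ℝ}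
    (hM : ∀ i j, M i j = inner ℝ (φ i) (φ j)) (hdet : IsUnit M.det) (u : E) :
    inner ℝ (u - ∑ i, (M⁻¹ *ᵥ fun i => inner ℝ (φ i) u) i • φ i)
      (∑ i, (M⁻¹ *ᵥ fun i => inner ℝ (φ i) u) i • φ i) = 0 := by
  set b := M⁻¹ *ᵥ fun i => inner ℝ (φ i) u with hb
  have hMb : M *ᵥ b = fun i => inner ℝ (φ i) u := by
    rw [hb, mulVec_mulVec, mul_nonsing_inv _ hdet, one_mulVec]
  rw [inner_sum]
  refine Finset.sum_eq_zero fun i _ => ?_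
  rw [real_inner_smul_right, real_inner_comm, inner_sub_right, inner_sum,
    ← congrFun hMb i]
  simp [mulVec, dotProduct, hM, real_inner_smul_right, mul_comm]

lemma real_inner_self_of_inner_sub_eq_zero {u p : E} (h : inner ℝ (u - p) p = 0) :
    inner ℝ (u - p) u = ‖u - p‖ ^ 2 ∧ ‖u - p‖ ^ 2 = ‖u‖ ^ 2 - ‖p‖ ^ 2 := by
  have h1 : inner ℝ (u - p) u = ‖u - p‖ ^ 2 := by
    rw [← real_inner_self_eq_norm_sq, inner_sub_right (u - p) u p, h, sub_zero]
  refine ⟨h1, ?_⟩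
  have h2 := norm_add_sq_real (u - p) p
  rw [sub_add_cancel, h] at h2
  linarith

end Residual

section Matern

variable {α : ℝ} {d : ℕ}

lemma lbelow_lt (hα : 0 < α) : (lbelow α : ℝ) < α := by
  have h := Nat.ceil_lt_add_one hα.le
  have h1 : 1 ≤ Nat.ceil α := Nat.one_le_iff_ne_zero.2 (Nat.ceil_pos.2 hα).ne'
  rw [lbelow, Nat.cast_sub h1]
  push_cast
  linarith

lemma maternDensity_nonneg (ξ : Fin d → ℝ) : 0 ≤ maternDensity α d ξ :=
  Real.rpow_nonneg (by positivity) _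

@[fun_prop]
lemma continuous_maternDensity : Continuous (maternDensity α d) := by
  unfold maternDensity
  refine Continuous.rpow_const (by fun_prop) fun ξ => Or.inl ?_
  positivity

lemma maternDensity_le (hα : 0 < α) (ξ : Fin d → ℝ) :
    maternDensity α d ξ ≤ 2 ^ (α + (d : ℝ) / 2) * (1 + ‖ξ‖) ^ (-(2 * α + d)) := by
  have hs : ‖ξ‖ ^ 2 ≤ ∑ j, ξ j ^ 2 := by
    have : ‖ξ‖ ≤ Real.sqrt (∑ j, ξ j ^ 2) := by
      refine (pi_norm_le_iff_of_nonneg (Real.sqrt_nonneg _)).2 fun j => ?_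
      rw [Real.norm_eq_abs, ← Real.sqrt_sq_eq_abs]
      exact Real.sqrt_le_sqrt
        (Finset.single_le_sum (f := fun j => ξ j ^ 2) (fun i _ => sq_nonneg _) (Finset.mem_univ j))
    calc ‖ξ‖ ^ 2 ≤ Real.sqrt (∑ j, ξ j ^ 2) ^ 2 := by gcongr
      _ = _ := Real.sq_sqrt (by positivity)
  have hbase : (1 + ‖ξ‖) ^ 2 / 2 ≤ 1 + ∑ j, ξ j ^ 2 := by nlinarith [sq_nonneg (1 - ‖ξ‖)]
  have hpos : (0 : ℝ) < 1 + ‖ξ‖ := by positivity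
  calc maternDensity α d ξ ≤ ((1 + ‖ξ‖) ^ 2 / 2) ^ (-(α + (d : ℝ) / 2)) :=
        Real.rpow_le_rpow_of_nonpos (by positivity) hbase (by
          have : (0 : ℝ) ≤ d := d.cast_nonneg
          linarith)
    _ = _ := by
      rw [Real.div_rpow (by positivity) (by norm_num), ← Real.rpow_natCast, ← Real.rpow_mul hpos.le,
        Real.rpow_neg (by norm_num : (0 : ℝ) ≤ 2), div_inv_eq_mul, mul_comm]
      congr 2
      push_cast
      ring

lemma hasMoments_maternDensity (hα : 0 < α) :
    HasMoments (2 * lbelow α) fun ξ => (maternDensity α d ξ : ℂ) := by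
  have hint : Integrable fun ξ : Fin d → ℝ =>
      (2 : ℝ) ^ (α + (d : ℝ) / 2) * (1 + ‖ξ‖) ^ (-(2 * α + d - 2 * lbelow α)) :=
    (integrable_one_add_norm (by
      have := lbelow_lt hα
      simp only [Module.finrank_fintype_fun_eq_card, Fintype.card_fin]
      linarith)).const_mul _
  refine hint.mono' (Continuous.aestronglyMeasurable (by fun_prop))
    (Filter.Eventually.of_forall fun ξ => ?_)
  have hpos : (0 : ℝ) < 1 + ‖ξ‖ := by positivity
  rw [norm_mul, norm_pow, Complex.norm_real, Complex.norm_real, Real.norm_of_nonneg hpos.le,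
    Real.norm_of_nonneg (maternDensity_nonneg ξ)]
  calc (1 + ‖ξ‖) ^ (2 * lbelow α) * maternDensity α d ξ
      ≤ (1 + ‖ξ‖) ^ (2 * lbelow α) *
        (2 ^ (α + (d : ℝ) / 2) * (1 + ‖ξ‖) ^ (-(2 * α + d))) := by
        gcongr; exact maternDensity_le hα ξ
    _ = _ := by
      rw [mul_left_comm, ← Real.rpow_natCast, ← Real.rpow_add hpos]
      congr 2
      push_cast
      ring

lemma matern_eq_reFourier (hα : 0 < α) :
    matern α d = reFourier fun ξ => (maternDensity α d ξ : ℂ) := by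
  funext x
  have h := integral_re ((hasMoments_maternDensity (d := d) hα).planeWave_mul x).integrable
  simp only [RCLike.re_eq_complex_re] at h
  rw [reFourier, ← h, matern]
  simp only [Complex.re_mul_ofReal, planeWave_re, maternDensity]

lemma matern_neg (x : Fin d → ℝ) : matern α d (-x) = matern α d x := by
  simp [matern]

lemma matern_sub (hα : 0 < α) (a x : Fin d → ℝ) :
    matern α d (a - x) =
      reFourier (fun ξ => planeWave (-a) ξ * (maternDensity α d ξ : ℂ)) x := by
  rw [reFourier_planeWave_neg_mul, ← matern_eq_reFourier hα, ← matern_neg, neg_sub]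

lemma contDiff_condK (hα : 0 < α) {n : ℕ} (w : Fin n → Fin d → ℝ) :
    ContDiff ℝ ((2 * lbelow α : ℕ) : ℕ∞)
      (fun p : (Fin d → ℝ) × (Fin d → ℝ) => condK α d w p.1 p.2) := by
  have h : ContDiff ℝ ((2 * lbelow α : ℕ) : ℕ∞) (matern α d) := by
    rw [matern_eq_reFourier hα]
    exact contDiff_reFourier (hasMoments_maternDensity hα)
  have hfst (a : Fin d → ℝ) : ContDiff ℝ ((2 * lbelow α : ℕ) : ℕ∞)
      (fun p : (Fin d → ℝ) × (Fin d → ℝ) => matern α d (a - p.1)) :=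
    h.comp (contDiff_const.sub contDiff_fst)
  have hsnd (a : Fin d → ℝ) : ContDiff ℝ ((2 * lbelow α : ℕ) : ℕ∞)
      (fun p : (Fin d → ℝ) × (Fin d → ℝ) => matern α d (a - p.2)) :=
    h.comp (contDiff_const.sub contDiff_snd)
  simp only [condK, maternVec, dotProduct, mulVec]
  exact (h.comp (contDiff_fst.sub contDiff_snd)).sub (ContDiff.sum fun i _ =>
    (hfst _).mul (ContDiff.sum fun j _ => contDiff_const.mul (hsnd _)))

/-- The feature map of the kernel `∂^k_x ∂^k_y K(x, y)`. -/
def maternFeature (α : ℝ) {d : ℕ} (k : Fin d → ℕ) (x ξ : Fin d → ℝ) : ℂ :=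
  planeWave x ξ * (mderSymbol k ξ * (Real.sqrt (maternDensity α d ξ) : ℂ))

lemma continuous_maternFeature (k : Fin d → ℕ) (x : Fin d → ℝ) :
    Continuous (maternFeature α k x) := by
  have := continuous_mderSymbol k
  unfold maternFeature
  fun_prop

lemma norm_maternFeature_sq (k : Fin d → ℕ) (x ξ : Fin d → ℝ) :
    ‖maternFeature α k x ξ‖ ^ 2 = ‖mderSymbol k ξ‖ ^ 2 * maternDensity α d ξ := by
  rw [maternFeature, norm_mul, norm_planeWave, one_mul, norm_mul, Complex.norm_real, mul_pow,
    Real.norm_of_nonneg (Real.sqrt_nonneg _), Real.sq_sqrt (maternDensity_nonneg ξ)]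

lemma norm_maternFeature_sq_le {k : Fin d → ℕ} (hk : ∑ j, k j ≤ lbelow α) (x ξ : Fin d → ℝ) :
    ‖maternFeature α k x ξ‖ ^ 2 ≤ (1 + ‖ξ‖) ^ (2 * lbelow α) * maternDensity α d ξ := by
  rw [norm_maternFeature_sq, mul_comm 2, pow_mul]
  have := maternDensity_nonneg (α := α) ξ
  have h1 : (1 : ℝ) ≤ 1 + ‖ξ‖ := by linarith [norm_nonneg ξ]
  gcongr
  exact (norm_mderSymbol_le k ξ).trans (pow_le_pow_right₀ h1 hk)

lemma integrable_one_add_norm_pow_mul_maternDensity (hα : 0 < α) :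
    Integrable fun ξ : Fin d → ℝ => (1 + ‖ξ‖) ^ (2 * lbelow α) * maternDensity α d ξ := by
  have h := (hasMoments_maternDensity (d := d) hα).re
  refine h.congr (Filter.Eventually.of_forall fun ξ => ?_)
  simp only [RCLike.re_eq_complex_re]
  norm_cast

lemma memLp_maternFeature (hα : 0 < α) {k : Fin d → ℕ} (hk : ∑ j, k j ≤ lbelow α)
    (x : Fin d → ℝ) : MemLp (maternFeature α k x) 2 := by
  have hc := continuous_maternFeature (α := α) k x
  refine (memLp_two_iff_integrable_sq_norm hc.aestronglyMeasurable).2 ?_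
  refine (integrable_one_add_norm_pow_mul_maternDensity (d := d) hα).mono'
    (hc.norm.pow 2).aestronglyMeasurable (Filter.Eventually.of_forall fun ξ => ?_)
  rw [norm_pow, norm_norm]
  exact norm_maternFeature_sq_le hk x ξ

lemma inner_toLp {f g : (Fin d → ℝ) → ℂ} (hf : MemLp f 2) (hg : MemLp g 2) :
    inner ℝ (hf.toLp f) (hg.toLp g) = ∫ ξ, inner ℝ (f ξ) (g ξ) := by
  rw [L2.inner_def]
  refine integral_congr_ae ?_
  filter_upwards [hf.coeFn_toLp, hg.coeFn_toLp] with ξ h1 h2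
  rw [h1, h2]

lemma norm_toLp_maternFeature_sq_le (hα : 0 < α) {k : Fin d → ℕ} (hk : ∑ j, k j ≤ lbelow α)
    (x : Fin d → ℝ) :
    ‖(memLp_maternFeature hα hk x).toLp _‖ ^ 2 ≤
      ∫ ξ : Fin d → ℝ, (1 + ‖ξ‖) ^ (2 * lbelow α) * maternDensity α d ξ := by
  rw [← real_inner_self_eq_norm_sq, inner_toLp]
  refine integral_mono_of_nonneg (Filter.Eventually.of_forall fun ξ => real_inner_self_nonneg)
    (integrable_one_add_norm_pow_mul_maternDensity hα) (Filter.Eventually.of_forall fun ξ => ?_)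
  simp only [real_inner_self_eq_norm_sq]
  exact norm_maternFeature_sq_le hk x ξ

lemma hasMoments_symbol_mul (hα : 0 < α) {k : Fin d → ℕ}
    (hk : ∑ j, k j ≤ lbelow α) (x : Fin d → ℝ) :
    HasMoments (lbelow α) fun ξ => (starRingEnd ℂ) (mderSymbol k ξ) *
      (planeWave x ξ * (maternDensity α d ξ : ℂ)) :=
  ((hasMoments_maternDensity hα).planeWave_mul x).mul
    (Complex.continuous_conj.comp (continuous_mderSymbol k))
    (fun ξ => by simpa using norm_mderSymbol_le k ξ) (by omega)

lemma inner_toLp_maternFeature (hα : 0 < α) {k l : Fin d → ℕ} (hk : ∑ j, k j ≤ lbelow α)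
    (hl : ∑ j, l j ≤ lbelow α) (x y : Fin d → ℝ) :
    inner ℝ ((memLp_maternFeature hα hk x).toLp _) ((memLp_maternFeature hα hl y).toLp _) =
      reFourier (fun ξ => mderSymbol l ξ * ((starRingEnd ℂ) (mderSymbol k ξ) *
        (planeWave (-x) ξ * (maternDensity α d ξ : ℂ)))) y := by
  have hm : HasMoments 0 fun ξ => mderSymbol l ξ * ((starRingEnd ℂ) (mderSymbol k ξ) *
        (planeWave (-x) ξ * (maternDensity α d ξ : ℂ))) :=
    ((hasMoments_symbol_mul hα hk (-x)).mono (by simpa using hl)).mderSymbol_mul l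
  have h := integral_re (hm.planeWave_mul y).integrable
  simp only [RCLike.re_eq_complex_re] at h
  rw [inner_toLp, reFourier, ← h]
  congr 1
  funext ξ
  have hs : (maternDensity α d ξ : ℂ) =
      (Real.sqrt (maternDensity α d ξ) : ℂ) * (Real.sqrt (maternDensity α d ξ) : ℂ) := by
    exact_mod_cast (Real.mul_self_sqrt (maternDensity_nonneg ξ)).symm
  rw [Complex.inner, maternFeature, maternFeature, hs]
  simp only [map_mul, conj_planeWave, Complex.conj_ofReal]
  congr 1
  ring

lemma mderSymbol_zero (ξ : Fin d → ℝ) : mderSymbol 0 ξ = 1 := by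
  simp [mderSymbol]

lemma reFourier_mderSymbol_mul_swap (k : Fin d → ℕ) (x y : Fin d → ℝ) :
    reFourier (fun ξ => mderSymbol k ξ * (planeWave (-y) ξ * (maternDensity α d ξ : ℂ))) x =
      reFourier (fun ξ => (starRingEnd ℂ) (mderSymbol k ξ) *
        (planeWave (-x) ξ * (maternDensity α d ξ : ℂ))) y := by
  rw [reFourier, ← Complex.conj_re, ← integral_conj, reFourier]
  congr 2
  funext ξ
  simp only [map_mul, conj_planeWave, Complex.conj_ofReal, neg_neg]
  ring

/-- The mixed derivative of the conditional kernel is the pairing of a feature vector with the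
residual of another one under the projection onto the span of the features at the nodes. -/
lemma mder2_condK (hα : 0 < α) {n : ℕ} (w : Fin n → Fin d → ℝ) {k : Fin d → ℕ}
    (hk : ∑ j, k j ≤ lbelow α) (h0 : ∑ j, (0 : Fin d → ℕ) j ≤ lbelow α) (x₁ x₂ : Fin d → ℝ) :
    mder2 d k k (condK α d w) x₁ x₂ =
      inner ℝ ((memLp_maternFeature hα hk x₂).toLp _ -
        ∑ i, ((maternMat α d w)⁻¹ *ᵥ fun i => inner ℝ ((memLp_maternFeature hα h0 (w i)).toLp _)
          ((memLp_maternFeature hα hk x₂).toLp _)) i • (memLp_maternFeature hα h0 (w i)).toLp _)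
        ((memLp_maternFeature hα hk x₁).toLp _) := by
  have hmom (a : Fin d → ℝ) : HasMoments (∑ j, k j)
      fun ξ => planeWave (-a) ξ * (maternDensity α d ξ : ℂ) :=
    ((hasMoments_maternDensity hα).planeWave_mul _).mono (by omega)
  have hcond (y : Fin d → ℝ) : condK α d w y = fun x =>
      reFourier (fun ξ => planeWave (-y) ξ * (maternDensity α d ξ : ℂ)) x -
        ∑ i, (maternVec α d w y ᵥ* (maternMat α d w)⁻¹) i *
          reFourier (fun ξ => planeWave (-w i) ξ * (maternDensity α d ξ : ℂ)) x := by
    funext x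
    rw [condK, dotProduct_mulVec, matern_sub hα y x]
    simp only [dotProduct, maternVec, matern_sub hα (w _) x]
  have hs (i : Fin n) (x : Fin d → ℝ) :
      reFourier (fun ξ => mderSymbol k ξ * (planeWave (-w i) ξ * (maternDensity α d ξ : ℂ))) x =
      inner ℝ ((memLp_maternFeature hα h0 (w i)).toLp _)
        ((memLp_maternFeature hα hk x).toLp _) := by
    rw [inner_toLp_maternFeature hα h0 hk]
    simp only [mderSymbol_zero, map_one, one_mul]
  have hinner : (fun y => mder d k (condK α d w y) x₂) = fun y =>
      reFourier (fun ξ => (starRingEnd ℂ) (mderSymbol k ξ) *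
        (planeWave (-x₂) ξ * (maternDensity α d ξ : ℂ))) y -
      ∑ i, ((maternMat α d w)⁻¹ *ᵥ fun i => inner ℝ ((memLp_maternFeature hα h0 (w i)).toLp _)
          ((memLp_maternFeature hα hk x₂).toLp _)) i *
        reFourier (fun ξ => planeWave (-w i) ξ * (maternDensity α d ξ : ℂ)) y := by
    funext y
    rw [hcond, mder_reFourier_sub_sum k (hmom y) (fun i => hmom (w i)),
      reFourier_mderSymbol_mul_swap]
    simp only [hs, ← matern_sub hα]
    congr 1
    change (maternVec α d w y ᵥ* (maternMat α d w)⁻¹) ⬝ᵥ _ = _ ⬝ᵥ maternVec α d w y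
    rw [← dotProduct_mulVec, dotProduct_comm]
  rw [mder2, hinner, mder_reFourier_sub_sum k ((hasMoments_symbol_mul hα hk _).mono hk)
    (fun i => hmom (w i)), inner_sub_left, sum_inner]
  simp only [hs, real_inner_smul_left, inner_toLp_maternFeature hα hk hk]

end Matern

/-- Lemma `matern cond smooth`, boundedness part: the conditional kernel
`K̃` is `2⌊α⌋⁻`-times continuously differentiable on ℝ^{2d}, and with a constant `C`
independent of the conditioning set `A`, `|K̃^{(k,k)}(x₁,x₂)| ≤ C` and
`0 ≤ K̃^{(k,k)}(x,x) ≤ K^{(k,k)}(x,x)` for all `|k| ≤ ⌊α⌋⁻`. -/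
theorem stmt9 (α : ℝ) (hα : 0 < α) (d : ℕ) (hd : 1 ≤ d) :
    ∃ C : ℝ, 0 < C ∧
      ∀ (n : ℕ) (w : Fin n → Fin d → ℝ), Function.Injective w →
        IsUnit (maternMat α d w).det →
        ContDiff ℝ ((2 * lbelow α : ℕ) : ℕ∞)
          (fun p : (Fin d → ℝ) × (Fin d → ℝ) => condK α d w p.1 p.2) ∧
        ∀ k : Fin d → ℕ, (∑ j, k j) ≤ lbelow α →
          (∀ x₁ x₂ : Fin d → ℝ, |mder2 d k k (condK α d w) x₁ x₂| ≤ C) ∧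
          ∀ x : Fin d → ℝ,
            0 ≤ mder2 d k k (condK α d w) x x ∧
            mder2 d k k (condK α d w) x x ≤
              mder2 d k k (fun a b => matern α d (a - b)) x x := by
  have h0 : ∑ j, (0 : Fin d → ℕ) j ≤ lbelow α := by simp
  set I₀ := ∫ ξ : Fin d → ℝ, (1 + ‖ξ‖) ^ (2 * lbelow α) * maternDensity α d ξ with hI₀
  have hI₀_nonneg : 0 ≤ I₀ := integral_nonneg fun ξ =>
    mul_nonneg (by positivity) (maternDensity_nonneg ξ)
  refine ⟨I₀ + 1, by positivity, fun n w _ hdet => ⟨contDiff_condK hα w, fun k hk => ?_⟩⟩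
  have hM (i j : Fin n) : maternMat α d w i j =
      inner ℝ ((memLp_maternFeature hα h0 (w i)).toLp _)
        ((memLp_maternFeature hα h0 (w j)).toLp _) := by
    rw [inner_toLp_maternFeature hα h0 h0]
    simp only [mderSymbol_zero, map_one, one_mul]
    exact matern_sub hα _ _
  have hres (x : Fin d → ℝ) := real_inner_self_of_inner_sub_eq_zero
    (inner_residual_eq_zero hM hdet ((memLp_maternFeature hα hk x).toLp _))
  have hK : (fun a b => matern α d (a - b)) = condK α d (Fin.elim0 : Fin 0 → Fin d → ℝ) := by
    funext a b
    simp [condK]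
  refine ⟨fun x₁ x₂ => ?_, fun x => ⟨?_, ?_⟩⟩
  · rw [mder2_condK hα w hk h0]
    refine (abs_real_inner_le_norm _ _).trans ?_
    have h1 := norm_toLp_maternFeature_sq_le hα hk x₁
    have h2 := norm_toLp_maternFeature_sq_le hα hk x₂
    have h3 := (hres x₂).2
    rw [← hI₀] at h1 h2
    nlinarith [sq_nonneg (‖(memLp_maternFeature hα hk x₂).toLp _ -
        ∑ i, ((maternMat α d w)⁻¹ *ᵥ fun i => inner ℝ ((memLp_maternFeature hα h0 (w i)).toLp _)
          ((memLp_maternFeature hα hk x₂).toLp _)) i • (memLp_maternFeature hα h0 (w i)).toLp _‖ -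
        ‖(memLp_maternFeature hα hk x₁).toLp _‖),
      sq_nonneg ‖∑ i, ((maternMat α d w)⁻¹ *ᵥ fun i =>
        inner ℝ ((memLp_maternFeature hα h0 (w i)).toLp _)
          ((memLp_maternFeature hα hk x₂).toLp _)) i • (memLp_maternFeature hα h0 (w i)).toLp _‖]
  · rw [mder2_condK hα w hk h0, (hres x).1]
    positivity
  · rw [mder2_condK hα w hk h0, (hres x).1, (hres x).2, hK, mder2_condK hα _ hk h0]
    simp only [Finset.univ_eq_empty, Finset.sum_empty, sub_zero, real_inner_self_eq_norm_sq]
    exact sub_le_self _ (sq_nonneg _)
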